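/- Let Σ_A(ℕ) be a topologically mixing, finitely primitive (BIP) countable Markov shift and f : Σ_A(ℕ) → ℝ satisfy the Walters condition with Var_1 f < ∞ and P(f) < ∞. Assume f has a unique maximizing measure μ, let V be a bounded calibrated sub-action, R_+ = −f − V + V∘σ + m(f), and R_+^∞(x) = Σ_{j=0}^∞ R_+(σ^j(x)) ∈ [0,∞]. If x ∈ Σ_A(ℕ) satisfies R_+^∞(x) < ∞, then every point p ∈ supp(μ) is an accumulation point of the sequence (σ^n(x))_{n≥0}. -/

import Mathlib

open Filter Topology MeasureTheory
open scoped ENNReal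

/-- The countable Markov shift over alphabet ℕ determined by the 0-1 matrix `A`. -/
def MarkovShift (A : ℕ → ℕ → Bool) : Type :=
  {x : ℕ → ℕ // ∀ i, A (x i) (x (i + 1)) = true}

namespace MarkovShift

variable {A : ℕ → ℕ → Bool}

instance : TopologicalSpace (MarkovShift A) :=
  instTopologicalSpaceSubtype

instance : MeasurableSpace (MarkovShift A) := borel _

instance : BorelSpace (MarkovShift A) := ⟨rfl⟩

/-- The shift map. -/
def shift (x : MarkovShift A) : MarkovShift A :=
  ⟨fun n => x.1 (n + 1), fun i => x.2 (i + 1)⟩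

/-- The cylinder set determined by a finite word. -/
def cylinder (w : List ℕ) : Set (MarkovShift A) :=
  {x | ∀ i : Fin w.length, x.1 i = w.get i}

/-- The cylinder set determined by the first `m` coordinates of `x`. -/
def cylOf (x : MarkovShift A) (m : ℕ) : Set (MarkovShift A) :=
  {y | ∀ i < m, y.1 i = x.1 i}

/-- A symbol is admissible when its cylinder is nonempty. -/
def Admissible (A : ℕ → ℕ → Bool) (a : ℕ) : Prop :=
  ∃ x : MarkovShift A, x.1 0 = a

/-- Topologically mixing. -/
def TopologicallyMixing (A : ℕ → ℕ → Bool) : Prop :=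
  ∀ a b : ℕ, Admissible A a → Admissible A b →
    ∃ N : ℕ, ∀ n ≥ N, ∃ x : MarkovShift A, x.1 0 = a ∧ (shift^[n] x).1 0 = b

/-- Finitely primitive (BIP). -/
def FinitelyPrimitive (A : ℕ → ℕ → Bool) : Prop :=
  ∃ (K₀ : ℕ) (F : Finset ℕ), ∀ a b : ℕ, Admissible A a → Admissible A b →
    ∃ w : List ℕ, w.length = K₀ ∧ (∀ c ∈ w, c ∈ F) ∧
      List.Chain' (fun u v => A u v = true) (a :: (w ++ [b]))

/-- First coordinate where two distinct points disagree. -/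
noncomputable def firstDiff (x y : MarkovShift A) (h : x ≠ y) : ℕ :=
  Nat.find (Function.ne_iff.mp (fun hxy : x.1 = y.1 => h (Subtype.ext hxy)))

open Classical in
/-- The metric `d(x,y) = r^{t(x,y)}`. -/
noncomputable def dist' (r : ℝ) (x y : MarkovShift A) : ℝ :=
  if h : x = y then 0 else r ^ firstDiff x y h

/-- Birkhoff sum `S_n f`. -/
def birkhoff (f : MarkovShift A → ℝ) (n : ℕ) (x : MarkovShift A) : ℝ :=
  ∑ j ∈ Finset.range n, f (shift^[j] x)

/-- The set of values `|S_n f x - S_n f y|` over pairs agreeing on the first `m` coordinates. -/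
def varSet (f : MarkovShift A → ℝ) (n m : ℕ) : Set ℝ :=
  {c | ∃ x y : MarkovShift A, (∀ i < m, x.1 i = y.1 i) ∧ c = |birkhoff f n x - birkhoff f n y|}

/-- `Var_m (S_n f)`. -/
noncomputable def varBirk (f : MarkovShift A → ℝ) (n m : ℕ) : ℝ := sSup (varSet f n m)

/-- `Var_1 f < ∞`. -/
def Var1Finite (f : MarkovShift A → ℝ) : Prop := BddAbove (varSet f 1 1)

/-- The set whose supremum is `sup_{n ≥ 1} Var_{n+k}(S_n f)`. -/
def waltersSet (f : MarkovShift A → ℝ) (k : ℕ) : Set ℝ :=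
  {c | ∃ n, 1 ≤ n ∧ c ∈ varSet f n (n + k)}

/-- `M_k = sup_{n ≥ 1} Var_{n+k}(S_n f)`. -/
noncomputable def waltersSup (f : MarkovShift A → ℝ) (k : ℕ) : ℝ := sSup (waltersSet f k)

/-- The Walters condition. -/
def SatisfiesWalters (f : MarkovShift A → ℝ) : Prop :=
  (∀ k, 1 ≤ k → BddAbove (waltersSet f k)) ∧
    Tendsto (fun k => waltersSup f k) atTop (𝓝 0)

/-- The partition function `Z_n(f,a) = Σ_{σ^n x = x, x₀ = a} e^{S_n f (x)}`. -/
noncomputable def partitionSum (f : MarkovShift A → ℝ) (n : ℕ) (a : ℕ) : ℝ :=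
  ∑' x : {x : MarkovShift A // shift^[n] x = x ∧ x.1 0 = a}, Real.exp (birkhoff f n x.1)

/-- `f` has (finite) Gurevich pressure `p`. -/
def HasGurevichPressure (f : MarkovShift A → ℝ) (p : ℝ) : Prop :=
  ∀ a : ℕ, Admissible A a →
    (∀ n, 1 ≤ n → Summable fun x : {x : MarkovShift A // shift^[n] x = x ∧ x.1 0 = a} =>
        Real.exp (birkhoff f n x.1)) ∧
    Tendsto (fun n : ℕ => (1 / (n : ℝ)) * Real.log (partitionSum f n a)) atTop (𝓝 p)

/-- σ-invariant Borel probability measure. -/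
def IsInvariantProb (μ : Measure (MarkovShift A)) : Prop :=
  IsProbabilityMeasure μ ∧ μ.map shift = μ

/-- `m(f)`, the maximal ergodic average. -/
noncomputable def mf (f : MarkovShift A → ℝ) : ℝ :=
  sSup {c | ∃ μ : Measure (MarkovShift A),
    IsInvariantProb μ ∧ Integrable f μ ∧ ∫ x, f x ∂μ = c}

/-- A maximizing measure for `f`. -/
def IsMaximizing (f : MarkovShift A → ℝ) (μ : Measure (MarkovShift A)) : Prop :=
  IsInvariantProb μ ∧ Integrable f μ ∧ ∫ x, f x ∂μ = mf f

/-- Bounded real valued function. -/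
def BoundedFun (g : MarkovShift A → ℝ) : Prop := ∃ C, ∀ x, |g x| ≤ C

/-- A bounded calibrated sub-action for `f`. -/
def IsCalibratedSubaction (f V : MarkovShift A → ℝ) : Prop :=
  Continuous V ∧ BoundedFun V ∧
    (∀ x, f x + V x - V (shift x) - mf f ≤ 0) ∧
    (∀ y, ∃ x, shift x = y ∧ f x + V x - V (shift x) - mf f = 0)

/-- The Ruelle transfer operator `(L_g u)(x) = Σ_{σ y = x} e^{g(y)} u(y)`. -/
noncomputable def ruelle (g u : MarkovShift A → ℝ) (x : MarkovShift A) : ℝ :=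
  ∑' y : {y : MarkovShift A // shift y = x}, Real.exp (g y.1) * u y.1

/-- Ruelle-Perron-Frobenius data for the potential `f` with pressure `p`:
eigenfunction `h`, eigenmeasure `ν`. -/
def IsRPF (f : MarkovShift A → ℝ) (p : ℝ) (h : MarkovShift A → ℝ)
    (ν : Measure (MarkovShift A)) : Prop :=
  Continuous h ∧ (∀ x, 0 < h x) ∧
    (∀ x, ruelle f h x = Real.exp p * h x) ∧
    IsProbabilityMeasure ν ∧
    (∀ g : MarkovShift A → ℝ, Continuous g → BoundedFun g →
      ∫ x, ruelle f g x ∂ν = Real.exp p * ∫ x, g x ∂ν) ∧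
    ∫ x, h x ∂ν = 1

/-- The Gibbs measure `dμ = h dν`. -/
noncomputable def gibbs (h : MarkovShift A → ℝ) (ν : Measure (MarkovShift A)) :
    Measure (MarkovShift A) :=
  ν.withDensity fun x => ENNReal.ofReal (h x)

/-- The Mañé potential `S_f(x,y)` (with respect to the metric of parameter `r`). -/
noncomputable def manePot (r : ℝ) (f : MarkovShift A → ℝ) (x y : MarkovShift A) : EReal :=
  ⨅ ε : {ε : ℝ // 0 < ε}, ⨆ n : {n : ℕ // 1 ≤ n},
    ⨆ _z : {z : MarkovShift A // dist' r x z < ε.1 ∧ shift^[n.1] z = y},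
      ((birkhoff (fun w => f w - mf f) n.1 _z.1 : ℝ) : EReal)

/-- The (topological) support of a measure. -/
def msupport (μ : Measure (MarkovShift A)) : Set (MarkovShift A) :=
  {x | ∀ U : Set (MarkovShift A), IsOpen U → x ∈ U → 0 < μ U}

end MarkovShift

namespace MarkovShift

lemma iter_coord {A : ℕ → ℕ → Bool} (n : ℕ) (x : MarkovShift A) (i : ℕ) :
    (shift^[n] x).1 i = x.1 (n + i) := by
  induction n generalizing x with
  | zero => simp
  | succ n ih =>
    rw [Function.iterate_succ_apply, ih]
    show x.1 (n + i + 1) = _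
    rw [show n + i + 1 = n + 1 + i by omega]

lemma continuous_shift' {A : ℕ → ℕ → Bool} : Continuous (shift : MarkovShift A → MarkovShift A) := by
  refine Continuous.subtype_mk ?_ _
  exact continuous_pi fun n => (continuous_apply (n + 1)).comp continuous_subtype_val

lemma closed_emb {A : ℕ → ℕ → Bool} :
    IsClosedEmbedding (Subtype.val : MarkovShift A → (ℕ → ℕ)) := by
  have hc : IsClosed {x : ℕ → ℕ | ∀ i, A (x i) (x (i + 1)) = true} := by
    rw [Set.ofPred_forall]
    refine isClosed_iInter fun i => ?_
    have hcont : Continuous (fun x : ℕ → ℕ => A (x i) (x (i + 1))) := by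
      have h1 : Continuous (fun x : ℕ → ℕ => (x i, x (i + 1))) := by fun_prop
      exact (continuous_of_discreteTopology (f := fun p : ℕ × ℕ => A p.1 p.2)).comp h1
    exact isClosed_eq hcont continuous_const
  exact hc.isClosedEmbedding_subtypeVal

instance instMetrizable {A : ℕ → ℕ → Bool} : TopologicalSpace.MetrizableSpace (MarkovShift A) :=
  closed_emb.isEmbedding.metrizableSpace

lemma continuous_f {A : ℕ → ℕ → Bool} (f : MarkovShift A → ℝ) (hW : SatisfiesWalters f) :
    Continuous f := by
  rw [continuous_iff_continuousAt]
  intro x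
  rw [ContinuousAt, Metric.tendsto_nhds]
  intro ε hε
  have h1 := hW.2.eventually (gt_mem_nhds hε)
  obtain ⟨k, hk, hk1⟩ := (h1.and (eventually_ge_atTop 1)).exists
  have hopen : ∀ᶠ y in 𝓝 x, ∀ i ∈ Finset.range (1 + k), y.1 i = x.1 i := by
    rw [Filter.eventually_all_finset]
    intro i _
    have hc : Continuous (fun y : MarkovShift A => y.1 i) :=
      (continuous_apply i).comp continuous_subtype_val
    exact hc.continuousAt.eventually (isOpen_discrete {x.1 i} |>.mem_nhds rfl)
  filter_upwards [hopen] with y hy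
  have hmem : |f y - f x| ∈ waltersSet f k := by
    refine ⟨1, le_rfl, y, x, fun i hi => hy i (Finset.mem_range.2 hi), ?_⟩
    simp [birkhoff]
  rw [Real.dist_eq]
  exact (le_csSup (hW.1 k hk1) hmem).trans_lt hk

lemma exists_loop {A : ℕ → ℕ → Bool} (hbip : FinitelyPrimitive A) (a : ℕ) (ha : Admissible A a) :
    ∃ (K : ℕ) (F : Finset ℕ), ∀ b, Admissible A b → ∃ X : MarkovShift A,
      shift^[2 * K + 2] X = X ∧ X.1 0 = a ∧ X.1 (K + 1) = b ∧
        ∀ j < 2 * K + 2, j ≠ K + 1 → X.1 j ∈ F := by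
  obtain ⟨K, F, h⟩ := hbip
  refine ⟨K, insert a F, fun b hb => ?_⟩
  obtain ⟨w, hw, hwF, hwc⟩ := h a b ha hb
  obtain ⟨w', hw', hwF', hwc'⟩ := h b a hb ha
  have hR1 : ∀ i (hi : i + 1 < (a :: (w ++ [b])).length),
      A ((a :: (w ++ [b]))[i]) ((a :: (w ++ [b]))[i+1]) = true :=
    fun i hi => (List.isChain_iff_getElem.1 hwc) i hi
  have hR2 : ∀ i (hi : i + 1 < (b :: (w' ++ [a])).length),
      A ((b :: (w' ++ [a]))[i]) ((b :: (w' ++ [a]))[i+1]) = true :=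
    fun i hi => (List.isChain_iff_getElem.1 hwc') i hi
  let u : ℕ → ℕ := fun i => if i < K + 1 then (a :: (w ++ [b])).getD i 0 else
    (b :: (w' ++ [a])).getD (i - (K + 1)) 0
  have hu0 : u 0 = a := by simp [u]
  have huK : u (K + 1) = b := by simp [u]
  have hulast : u (2 * K + 2) = a := by
    have : 2 * K + 2 - (K + 1) = K + 1 := by omega
    have h2 : ¬ (2 * K + 2 < K + 1) := by omega
    simp only [u, h2, if_false, this, List.getD_cons_succ]
    rw [List.getD_append_right _ _ _ _ (by omega)]
    simp [hw']
  have hstep : ∀ i < 2 * K + 2, A (u i) (u (i + 1)) = true := by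
    intro i hi
    by_cases h1 : i < K + 1
    · have e1 : u i = (a :: (w ++ [b]))[i]'(by simp; omega) := by
        simp only [u, h1, if_true]
        rw [List.getD_eq_getElem]
      have e2 : u (i + 1) = (a :: (w ++ [b]))[i+1]'(by simp; omega) := by
        by_cases h2 : i + 1 < K + 1
        · simp only [u, h2, if_true]
          rw [List.getD_eq_getElem]
        · have : i = K := by omega
          subst this
          rw [huK]; simp [List.getElem_append, hw]
      rw [e1, e2]; exact hR1 i _
    · have h2 : ¬ (i + 1 < K + 1) := by omega
      have e1 : u i = (b :: (w' ++ [a]))[i - (K+1)]'(by simp; omega) := by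
        simp only [u, h1, if_false]
        rw [List.getD_eq_getElem]
      have e2 : u (i + 1) = (b :: (w' ++ [a]))[i - (K+1) + 1]'(by simp; omega) := by
        have : i + 1 - (K + 1) = i - (K + 1) + 1 := by omega
        simp only [u, h2, if_false, this]
        rw [List.getD_eq_getElem]
      rw [e1, e2]; exact hR2 _ _
  have huF : ∀ j < 2 * K + 2, j ≠ K + 1 → u j ∈ insert a F := by
    intro j hj hjK
    rcases Nat.eq_zero_or_pos j with rfl | hj0
    · rw [hu0]; simp
    refine Finset.mem_insert_of_mem ?_
    by_cases h1 : j < K + 1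
    · obtain ⟨j, rfl⟩ : ∃ k, j = k + 1 := ⟨j - 1, by omega⟩
      simp only [u, h1, if_true, List.getD_cons_succ]
      rw [List.getD_append _ _ _ _ (by omega), List.getD_eq_getElem _ _ (by omega)]
      exact hwF _ (List.getElem_mem _)
    · obtain ⟨k, hk⟩ : ∃ k, j - (K + 1) = k + 1 := ⟨j - (K + 1) - 1, by omega⟩
      simp only [u, h1, if_false, hk, List.getD_cons_succ]
      rw [List.getD_append _ _ _ _ (by omega), List.getD_eq_getElem _ _ (by omega)]
      exact hwF' _ (List.getElem_mem _)
  refine ⟨⟨fun i => u (i % (2 * K + 2)), fun i => ?_⟩, ?_, ?_, ?_, ?_⟩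
  · have hlt : i % (2 * K + 2) < 2 * K + 2 := Nat.mod_lt _ (by omega)
    have := hstep _ hlt
    by_cases h1 : i % (2 * K + 2) + 1 < 2 * K + 2
    · show A (u (i % (2 * K + 2))) (u ((i + 1) % (2 * K + 2))) = true
      rw [Nat.add_mod, Nat.mod_eq_of_lt (show 1 < 2 * K + 2 by omega), Nat.mod_eq_of_lt h1]
      exact this
    · have h2 : i % (2 * K + 2) + 1 = 2 * K + 2 := by omega
      show A (u (i % (2 * K + 2))) (u ((i + 1) % (2 * K + 2))) = true
      rw [Nat.add_mod, Nat.mod_eq_of_lt (show 1 < 2 * K + 2 by omega), h2, Nat.mod_self, hu0]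
      rw [h2, hulast] at this
      exact this
  · apply Subtype.ext
    funext i
    refine (iter_coord _ _ _).trans ?_
    show u ((2 * K + 2 + i) % (2 * K + 2)) = u (i % (2 * K + 2))
    simp
  · show u (0 % (2 * K + 2)) = _
    simp [hu0]
  · show u ((K + 1) % (2 * K + 2)) = _
    rw [Nat.mod_eq_of_lt (by omega), huK]
  · intro j hj hjK
    show u (j % (2 * K + 2)) ∈ _
    rw [Nat.mod_eq_of_lt hj]; exact huF j hj hjK

lemma var1_bound {A : ℕ → ℕ → Bool} (f : MarkovShift A → ℝ) (h : Var1Finite f) :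
    ∃ D, 0 ≤ D ∧ ∀ x y : MarkovShift A, x.1 0 = y.1 0 → |f x - f y| ≤ D := by
  obtain ⟨D, hD⟩ := h
  refine ⟨max D 0, le_max_right _ _, fun x y hxy => le_max_of_le_left (hD ⟨x, y, ?_, ?_⟩)⟩
  · intro i hi
    have : i = 0 := by omega
    rw [this, hxy]
  · simp [birkhoff]

lemma bdd_finset {A : ℕ → ℕ → Bool} (f : MarkovShift A → ℝ) (h : Var1Finite f) (F : Finset ℕ) :
    ∃ C, 0 ≤ C ∧ ∀ y : MarkovShift A, y.1 0 ∈ F → |f y| ≤ C := by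
  obtain ⟨D, hD0, hD⟩ := var1_bound f h
  induction F using Finset.induction_on with
  | empty => exact ⟨0, le_rfl, fun y hy => by simp at hy⟩
  | insert c F _ ih =>
    obtain ⟨C, hC0, hC⟩ := ih
    by_cases hc : ∃ z : MarkovShift A, z.1 0 = c
    · obtain ⟨z, hz⟩ := hc
      refine ⟨max C (|f z| + D), le_max_of_le_left hC0, fun y hy => ?_⟩
      rcases Finset.mem_insert.1 hy with hy | hy
      · have h1 := hD y z (by rw [hy, hz])
        have h2 : |f y| - |f z| ≤ |f y - f z| := abs_sub_abs_le_abs_sub _ _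
        exact le_max_of_le_right (by linarith)
      · exact le_max_of_le_left (hC y hy)
    · refine ⟨C, hC0, fun y hy => ?_⟩
      rcases Finset.mem_insert.1 hy with hy | hy
      · exact absurd ⟨y, hy⟩ hc
      · exact hC y hy

lemma coercive {A : ℕ → ℕ → Bool} (hbip : FinitelyPrimitive A) (f : MarkovShift A → ℝ)
    (hVar1 : Var1Finite f) (p : ℝ) (hP : HasGurevichPressure f p) (t : ℝ) :
    ∃ S : Finset ℕ, ∀ y : MarkovShift A, t ≤ f y → y.1 0 ∈ S := by
  by_cases hne : Nonempty (MarkovShift A)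
  swap
  · exact ⟨∅, fun y => absurd ⟨y⟩ hne⟩
  obtain ⟨y₀⟩ := hne
  have ha : Admissible A (y₀.1 0) := ⟨y₀, rfl⟩
  obtain ⟨K, F, hX⟩ := exists_loop hbip _ ha
  obtain ⟨D, hD0, hD⟩ := var1_bound f hVar1
  obtain ⟨C, hC0, hC⟩ := bdd_finset f hVar1 F
  haveI : Nonempty (MarkovShift A) := ⟨y₀⟩
  choose! X hX1 hX2 hX3 hX4 using hX
  have hsum := (hP _ ha).1 (2 * K + 2) (by omega)
  let g : {b // Admissible A b} →
      {x : MarkovShift A // shift^[2 * K + 2] x = x ∧ x.1 0 = y₀.1 0} :=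
    fun b => ⟨X b.1, hX1 _ b.2, hX2 _ b.2⟩
  have hg : Function.Injective g := by
    intro b c hbc
    have : X b.1 = X c.1 := congrArg Subtype.val hbc
    apply Subtype.ext
    rw [← hX3 _ b.2, ← hX3 _ c.2, this]
  have hs := (hsum.comp_injective hg).tendsto_cofinite_zero
  set δ := Real.exp (t - D - (2 * K + 2) * C) with hδ
  have hfin := hs.eventually (gt_mem_nhds (Real.exp_pos (t - D - (2 * K + 2) * C)))
  rw [Filter.eventually_cofinite] at hfin
  have hfin2 := hfin.image Subtype.val
  refine ⟨hfin2.toFinset, fun y hy => ?_⟩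
  rw [Set.Finite.mem_toFinset]
  have hb : Admissible A (y.1 0) := ⟨y, rfl⟩
  refine ⟨⟨y.1 0, hb⟩, ?_, rfl⟩
  simp only [Set.mem_ofPred_eq, not_lt, Function.comp, g]
  apply Real.exp_le_exp.2
  unfold birkhoff
  have hmem : K + 1 ∈ Finset.range (2 * K + 2) := Finset.mem_range.2 (by omega)
  rw [← Finset.add_sum_erase _ _ hmem]
  have h1 : t - D ≤ f (shift^[K + 1] (X (y.1 0))) := by
    have := hD (shift^[K + 1] (X (y.1 0))) y (by rw [iter_coord]; exact hX3 _ hb)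
    have := (abs_le.1 this).1
    linarith
  have h2 : -((2 * K + 2) * C) ≤
      ∑ j ∈ (Finset.range (2 * K + 2)).erase (K + 1), f (shift^[j] (X (y.1 0))) := by
    calc -((2 * (K:ℝ) + 2) * C)
        ≤ ∑ j ∈ (Finset.range (2 * K + 2)).erase (K + 1), -C := by
          rw [Finset.sum_const, Finset.card_erase_of_mem hmem, Finset.card_range, nsmul_eq_mul]
          have : ((2 * K + 2 - 1 : ℕ) : ℝ) = 2 * K + 1 := by
            have : 2 * K + 2 - 1 = 2 * K + 1 := by omega
            rw [this]; push_cast; ring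
          rw [this]; nlinarith
      _ ≤ _ := by
          refine Finset.sum_le_sum fun j hj => ?_
          rw [Finset.mem_erase, Finset.mem_range] at hj
          have := hC (shift^[j] (X (y.1 0))) (by rw [iter_coord]; exact hX4 _ hb j hj.2 hj.1)
          exact (abs_le.1 this).1
  linarith

/-- Empirical measures along the orbit of `x`. -/
noncomputable def emp {A : ℕ → ℕ → Bool} (x : MarkovShift A) (n : ℕ) : Measure (MarkovShift A) :=
  ((n : ℝ≥0∞) + 1)⁻¹ • ∑ j ∈ Finset.range (n + 1), Measure.dirac (shift^[j] x)

instance instEmpProb {A : ℕ → ℕ → Bool} (x : MarkovShift A) (n : ℕ) :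
    IsProbabilityMeasure (emp x n) := by
  constructor
  simp only [emp, Measure.smul_apply, Measure.finsetSum_apply, measure_univ, smul_eq_mul]
  simp only [Finset.sum_const, Finset.card_range, nsmul_eq_mul, mul_one]
  push_cast
  exact ENNReal.inv_mul_cancel (by simp) (by finiteness)

lemma integral_emp {A : ℕ → ℕ → Bool} (x : MarkovShift A) (n : ℕ) (φ : MarkovShift A → ℝ)
    (hφ : Measurable φ) :
    ∫ y, φ y ∂(emp x n) = ((n : ℝ) + 1)⁻¹ * ∑ j ∈ Finset.range (n + 1), φ (shift^[j] x) := by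
  rw [emp, integral_smul_measure, integral_finsetSum_measure]
  · congr 1
    · rw [ENNReal.toReal_inv, ENNReal.toReal_add (by simp) (by simp)]; simp
    · exact Finset.sum_congr rfl fun j _ => integral_dirac' _ _ hφ.stronglyMeasurable
  · intro j _
    exact integrable_dirac' hφ.stronglyMeasurable (by simp)

lemma emp_apply {A : ℕ → ℕ → Bool} (x : MarkovShift A) (n : ℕ) (s : Set (MarkovShift A))
    (hs : MeasurableSet s) :
    emp x n s = ENNReal.ofReal
      (((n : ℝ) + 1)⁻¹ * ∑ j ∈ Finset.range (n + 1), s.indicator 1 (shift^[j] x)) := by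
  rw [← integral_emp x n _ (measurable_one.indicator hs), integral_indicator_one hs,
    ofReal_measureReal]

lemma tight {A : ℕ → ℕ → Bool} (f : MarkovShift A → ℝ)
    (hco : ∀ t : ℝ, ∃ S : Finset ℕ, ∀ y : MarkovShift A, t ≤ f y → y.1 0 ∈ S)
    (M : ℝ) (hM : ∀ y, f y ≤ M) (x : MarkovShift A) (C : ℝ) (hC : 0 < C)
    (hS : ∀ n : ℕ, 1 ≤ n → ∑ j ∈ Finset.range n, (M - f (shift^[j] x)) ≤ C * n) :
    IsTightMeasureSet (Set.range (emp x)) := by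
  rw [isTightMeasureSet_iff_exists_isCompact_measure_compl_le]
  intro ε hε
  obtain ⟨e, he, hesum⟩ := ENNReal.exists_pos_sum_of_countable hε.ne' ℕ
  choose S hSt using hco
  let t : ℕ → ℝ := fun i => C * (1 + i) / e i
  let B : ℕ → Set (MarkovShift A) := fun i => {y | y.1 i ∉ S (M - t i)}
  have hcoord : ∀ i, Continuous (fun y : MarkovShift A => y.1 i) := fun i =>
    (continuous_apply i).comp continuous_subtype_val
  have hBm : ∀ i, MeasurableSet (B i) := fun i =>
    ((isOpen_discrete {c : ℕ | c ∉ S (M - t i)}).preimage (hcoord i)).measurableSet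
  refine ⟨Subtype.val ⁻¹' (Set.univ.pi fun i => (S (M - t i) : Set ℕ)), ?_, ?_⟩
  · exact closed_emb.isCompact_preimage
      (isCompact_univ_pi fun i => (S (M - t i)).finite_toSet.isCompact)
  rintro _ ⟨n, rfl⟩
  have hsub : (Subtype.val ⁻¹' (Set.univ.pi fun i => (S (M - t i) : Set ℕ)))ᶜ ⊆ ⋃ i, B i := by
    intro (y : MarkovShift A) hy
    by_contra hcon
    refine hy fun i _ => ?_
    by_contra hi
    exact hcon (Set.mem_iUnion.2 ⟨i, hi⟩)
  refine ((measure_mono hsub).trans (measure_iUnion_le _)).trans (le_trans ?_ hesum.le)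
  refine ENNReal.tsum_le_tsum fun i => ?_
  refine (emp_apply x n _ (hBm i)).le.trans ?_
  rw [← ENNReal.ofReal_coe_nnreal]
  apply ENNReal.ofReal_le_ofReal
  have hei : (0:ℝ) < e i := he i
  have hti : 0 < t i := by positivity
  have hn : (0:ℝ) < (n:ℝ) + 1 := by positivity
  rw [inv_mul_le_iff₀ hn]
  have key : ∑ j ∈ Finset.range (n + 1), (B i).indicator (1 : MarkovShift A → ℝ) (shift^[j] x)
      ≤ ∑ j ∈ Finset.range (n + 1), (M - f (shift^[i + j] x)) / t i := by
    refine Finset.sum_le_sum fun j _ => ?_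
    by_cases hj : shift^[j] x ∈ B i
    · rw [Set.indicator_of_mem hj, Pi.one_apply, one_le_div hti]
      by_contra hcon
      push Not at hcon
      apply hj
      have := hSt (M - t i) (shift^[i + j] x) (by linarith)
      rw [iter_coord] at this ⊢
      convert this using 2; omega
    · rw [Set.indicator_of_notMem hj]
      exact div_nonneg (by linarith [hM (shift^[i + j] x)]) hti.le
  refine key.trans ?_
  rw [← Finset.sum_div, div_le_iff₀ hti]
  have h2 := hS (i + (n + 1)) (by omega)
  rw [Finset.sum_range_add] at h2
  have h3 : 0 ≤ ∑ j ∈ Finset.range i, (M - f (shift^[j] x)) :=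
    Finset.sum_nonneg fun j _ => by linarith [hM (shift^[j] x)]
  have h4 : (n + 1) * e i * t i = C * ((1 + i) * (n + 1)) := by
    simp only [t]; field_simp
  rw [h4]
  have h5 : C * ((i + (n + 1) : ℕ) : ℝ) ≤ C * ((1 + i) * (n + 1)) := by
    apply mul_le_mul_of_nonneg_left _ hC.le
    push_cast
    have : (0:ℝ) ≤ i * n := by positivity
    nlinarith
  linarith

/-- If `R₊^∞(x) = Σ_j R₊(σʲ x) < ∞`, then every point of the support of the unique
maximizing measure is an accumulation point of the orbit `(σⁿ x)`. -/
theorem orbit_accumulates_on_support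
    (A : ℕ → ℕ → Bool)
    (hmix : TopologicallyMixing A)
    (hbip : FinitelyPrimitive A)
    (f : MarkovShift A → ℝ)
    (hWalters : SatisfiesWalters f)
    (hVar1 : Var1Finite f)
    (p : ℝ)
    (hPfin : HasGurevichPressure f p)
    (μmax : Measure (MarkovShift A))
    (hmax : IsMaximizing f μmax)
    (huniq : ∀ ν', IsMaximizing f ν' → ν' = μmax)
    (V : MarkovShift A → ℝ)
    (hV : IsCalibratedSubaction f V) :
    ∀ x : MarkovShift A,
      (∑' j : ℕ, ENNReal.ofReal
          (-(f (shift^[j] x) + V (shift^[j] x) - V (shift (shift^[j] x)) - mf f))) ≠ ⊤ →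
        ∀ q ∈ msupport μmax, MapClusterPt q atTop (fun n : ℕ => shift^[n] x) := by
  intro x hx q hq
  obtain ⟨hVc, ⟨B, hB⟩, hsub, -⟩ := hV
  have hfc := continuous_f f hWalters
  have hco := coercive hbip f hVar1 p hPfin
  have hsc : Continuous (shift : MarkovShift A → MarkovShift A) := continuous_shift'
  obtain ⟨M, hM⟩ : ∃ M, ∀ y, f y ≤ M := by
    obtain ⟨S, hS⟩ := hco 0
    obtain ⟨C, hC0, hC⟩ := bdd_finset f hVar1 S
    refine ⟨C, fun y => ?_⟩
    rcases le_total 0 (f y) with h | h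
    · exact (abs_le.1 (hC y (hS y h))).2
    · linarith
  set m := mf f with hm
  let R : MarkovShift A → ℝ := fun y => -(f y + V y - V (shift y) - m)
  have hRc : Continuous R := by
    have := hVc.comp hsc
    exact ((hfc.add hVc).sub this |>.sub continuous_const).neg
  have hR0 : ∀ y, 0 ≤ R y := fun y => by have := hsub y; simp only [R]; linarith
  -- bound for partial sums
  let T : ℝ := (∑' j : ℕ, ENNReal.ofReal (R (shift^[j] x))).toReal
  have hT0 : 0 ≤ T := ENNReal.toReal_nonneg
  have hT : ∀ n, ∑ j ∈ Finset.range n, R (shift^[j] x) ≤ T := by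
    intro n
    have h1 := ENNReal.sum_le_tsum (f := fun j => ENNReal.ofReal (R (shift^[j] x))) (Finset.range n)
    rw [← ENNReal.ofReal_sum_of_nonneg (fun j _ => hR0 _)] at h1
    exact (ENNReal.ofReal_le_iff_le_toReal hx).1 h1
  have hB0 : 0 ≤ B := (abs_nonneg _).trans (hB x)
  have htel : ∀ n, ∑ j ∈ Finset.range n, (M - f (shift^[j] x)) =
      n * (M - m) + ∑ j ∈ Finset.range n, R (shift^[j] x) + V x - V (shift^[n] x) := by
    intro n
    induction n with
    | zero => simp
    | succ n ih =>
      rw [Finset.sum_range_succ, ih, Finset.sum_range_succ, Function.iterate_succ_apply']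
      simp only [R]; push_cast; ring
  have htight := tight f hco M hM x (|M - m| + T + 2 * B + 1) (by positivity) (by
    intro n hn
    rw [htel]
    have h1 := hT n
    have h2 := abs_le.1 (hB x)
    have h3 := abs_le.1 (hB (shift^[n] x))
    have h4 := le_abs_self (M - m)
    have hn' : (1:ℝ) ≤ n := by exact_mod_cast hn
    have h5 : (n:ℝ) * (M - m) ≤ n * |M - m| := by gcongr
    have h6 : (T + 2 * B + 1) * 1 ≤ (T + 2 * B + 1) * n := by gcongr
    nlinarith)
  let E : ℕ → ProbabilityMeasure (MarkovShift A) := fun n => ⟨emp x n, inferInstance⟩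
  have hcpt : IsCompact (closure (Set.range E)) := by
    apply isCompact_closure_of_isTightMeasureSet
    apply htight.subset
    rintro _ ⟨_, ⟨n, rfl⟩, rfl⟩
    exact ⟨n, rfl⟩
  let 𝒰 : Ultrafilter ℕ := Ultrafilter.of atTop
  have h𝒰 : (𝒰 : Filter ℕ) ≤ atTop := Ultrafilter.of_le atTop
  obtain ⟨ν, -, hν⟩ := hcpt.ultrafilter_le_nhds (𝒰.map E) (by
    rw [le_principal_iff]
    exact Ultrafilter.mem_map.2 (Filter.univ_mem' fun n => subset_closure (Set.mem_range_self n)))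
  have hlim : Tendsto E 𝒰 (𝓝 ν) := hν
  have hint := ProbabilityMeasure.tendsto_iff_forall_integral_tendsto.1 hlim
  have hinv0 : Tendsto (fun n : ℕ => ((n:ℝ) + 1)⁻¹) 𝒰 (𝓝 0) := by
    refine Tendsto.mono_left ?_ h𝒰
    simpa [one_div] using tendsto_one_div_add_atTop_nhds_zero_nat (𝕜 := ℝ)
  have hEint : ∀ (φ : BoundedContinuousFunction (MarkovShift A) ℝ) n,
      ∫ y, φ y ∂(E n : Measure (MarkovShift A)) =
        ((n : ℝ) + 1)⁻¹ * ∑ j ∈ Finset.range (n + 1), φ (shift^[j] x) :=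
    fun φ n => integral_emp x n φ φ.continuous.measurable
  -- invariance
  have hνinv : (ν : Measure (MarkovShift A)).map shift = ν := by
    haveI : IsProbabilityMeasure ((ν : Measure (MarkovShift A)).map shift) :=
      Measure.isProbabilityMeasure_map hsc.aemeasurable
    refine ext_of_forall_integral_eq_of_IsFiniteMeasure fun φ => ?_
    rw [integral_map hsc.aemeasurable φ.continuous.aestronglyMeasurable]
    have h1 := hint φ
    have h2 := hint (φ.compContinuous ⟨shift, hsc⟩)
    have h3 : Tendsto (fun n => ∫ y, (φ.compContinuous ⟨shift, hsc⟩) y ∂(E n : Measure (MarkovShift A))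
        - ∫ y, φ y ∂(E n : Measure (MarkovShift A))) 𝒰 (𝓝 0) := by
      have hb : Tendsto (fun n : ℕ => ((n:ℝ) + 1)⁻¹ * (2 * ‖φ‖)) 𝒰 (𝓝 0) := by
        simpa using hinv0.mul_const (2 * ‖φ‖)
      refine squeeze_zero_norm (fun n => ?_) hb
      rw [hEint, hEint, ← mul_sub, ← Finset.sum_sub_distrib, norm_mul]
      have hpos : (0:ℝ) ≤ ((n:ℝ) + 1)⁻¹ := by positivity
      rw [Real.norm_of_nonneg hpos]
      refine mul_le_mul_of_nonneg_left ?_ hpos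
      have : ∀ j, (φ.compContinuous ⟨shift, hsc⟩) (shift^[j] x) = φ (shift^[j + 1] x) := by
        intro j
        rw [Function.iterate_succ_apply']; rfl
      simp only [this]
      rw [Finset.sum_range_sub (fun j => φ (shift^[j] x))]
      refine (norm_sub_le _ _).trans ?_
      have a1 := φ.norm_coe_le_norm (shift^[n + 1] x)
      have a2 := φ.norm_coe_le_norm (shift^[0] x)
      linarith
    have h4 := tendsto_nhds_unique h3 (h2.sub h1)
    have h5 : ∫ y, φ (shift y) ∂(ν : Measure (MarkovShift A)) =
      ∫ y, (φ.compContinuous ⟨shift, hsc⟩) y ∂(ν : Measure (MarkovShift A)) := rfl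
    rw [h5]; linarith
  -- R = 0 a.e.
  let φ : BoundedContinuousFunction (MarkovShift A) ℝ :=
    BoundedContinuousFunction.ofNormedAddCommGroup (fun y => min (R y) 1)
      (hRc.min continuous_const) 1 (fun y => by
        rw [Real.norm_of_nonneg (le_min (hR0 y) zero_le_one)]; exact min_le_right _ _)
  have hφv : ∀ y, φ y = min (R y) 1 := fun y => rfl
  have hφ0 : ∀ y, 0 ≤ φ y := fun y => le_min (hR0 y) zero_le_one
  have hφint : ∫ y, φ y ∂(ν : Measure (MarkovShift A)) = 0 := by
    refine tendsto_nhds_unique (hint φ) ?_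
    have hb : Tendsto (fun n : ℕ => ((n:ℝ) + 1)⁻¹ * T) 𝒰 (𝓝 0) := by
      simpa using hinv0.mul_const T
    refine squeeze_zero (fun n => integral_nonneg hφ0) (fun n => ?_) hb
    rw [hEint]
    refine mul_le_mul_of_nonneg_left ?_ (by positivity)
    exact (Finset.sum_le_sum fun j _ => min_le_left _ _).trans (hT (n + 1))
  have hRae : ∀ᵐ y ∂(ν : Measure (MarkovShift A)), R y = 0 := by
    have h1 := (integral_eq_zero_iff_of_nonneg hφ0 (φ.integrable _)).1 hφint
    filter_upwards [h1] with y hy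
    have hy' : min (R y) 1 = 0 := hy
    rcases min_choice (R y) 1 with h | h
    · rw [← h, hy']
    · rw [h] at hy'; norm_num at hy'
  have hfae : f =ᵐ[(ν : Measure (MarkovShift A))] fun y => V (shift y) - V y + m := by
    filter_upwards [hRae] with y hy
    simp only [R] at hy; linarith
  have hVint : Integrable V (ν : Measure (MarkovShift A)) :=
    Integrable.of_bound hVc.aestronglyMeasurable B (ae_of_all _ hB)
  have hVsint : Integrable (fun y => V (shift y)) (ν : Measure (MarkovShift A)) :=
    Integrable.of_bound (hVc.comp hsc).aestronglyMeasurable B (ae_of_all _ fun y => hB (shift y))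
  have hνmax : IsMaximizing f (ν : Measure (MarkovShift A)) := by
    refine ⟨⟨inferInstance, hνinv⟩, ?_, ?_⟩
    · exact ((hVsint.sub hVint).add (integrable_const m)).congr hfae.symm
    · rw [integral_congr_ae hfae, integral_add (f := fun y => V (shift y) - V y) (hVsint.sub hVint) (integrable_const m),
        integral_sub hVsint hVint,
        ← integral_map (φ := shift) (f := V) hsc.aemeasurable hVc.aestronglyMeasurable, hνinv]
      simp [hm]
  have hνeq := huniq _ hνmax
  -- conclusion
  rw [mapClusterPt_iff_frequently]
  intro s hs
  obtain ⟨U, hUs, hUo, hqU⟩ := mem_nhds_iff.1 hs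
  by_contra hcon
  rw [not_frequently, eventually_atTop] at hcon
  obtain ⟨N, hN⟩ := hcon
  have hpos : 0 < (ν : Measure (MarkovShift A)) U := by rw [hνeq]; exact hq U hUo hqU
  have hli := ProbabilityMeasure.le_liminf_measure_open_of_tendsto hlim hUo
  have hz : Tendsto (fun n => (E n : Measure (MarkovShift A)) U) 𝒰 (𝓝 0) := by
    have hb : Tendsto (fun n : ℕ => ENNReal.ofReal (((n:ℝ) + 1)⁻¹ * N)) 𝒰 (𝓝 0) := by
      have := ENNReal.tendsto_ofReal (hinv0.mul_const (N:ℝ))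
      simpa using this
    refine tendsto_of_tendsto_of_tendsto_of_le_of_le tendsto_const_nhds hb
      (fun n => bot_le) (fun n => ?_)
    show emp x n U ≤ _
    rw [emp_apply x n U hUo.measurableSet]
    apply ENNReal.ofReal_le_ofReal
    refine mul_le_mul_of_nonneg_left ?_ (by positivity)
    have h1 : ∀ j, U.indicator (1 : MarkovShift A → ℝ) (shift^[j] x) ≤
        if j ∈ Finset.range N then 1 else 0 := by
      intro j
      by_cases hj : j < N
      · rw [if_pos (Finset.mem_range.2 hj)]
        exact Set.indicator_le_self' (fun _ _ => zero_le_one) _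
      · rw [if_neg (by simpa using hj), Set.indicator_of_notMem]
        exact fun h => hN j (by omega) (hUs h)
    refine (Finset.sum_le_sum fun j _ => h1 j).trans ?_
    rw [← Finset.sum_filter, Finset.sum_const, nsmul_eq_mul, mul_one]
    have : ((Finset.range (n + 1)).filter (· ∈ Finset.range N)).card ≤ N := by
      calc _ ≤ (Finset.range N).card :=
            Finset.card_le_card fun j hj => (Finset.mem_filter.1 hj).2
        _ = N := Finset.card_range N
    exact_mod_cast this
  rw [hz.liminf_eq] at hli
  exact absurd hli (not_le.2 hpos)

end MarkovShift
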